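/- Fix error metrics d^K, d^N satisfying the stated assumptions and error levels εK, εN ≥ 0, and suppose (μK*, μN*) ∈ C_K(εK) × C_N(εN) is the UNIQUE minimizer of KL(μK ‖ μN) over C_K(εK) × C_N(εN). Let p_j → 0 with p_j ∈ (0,1), and let μ_{K,j}, μ_{N,j} ∈ P([0,1]) satisfy limsup_j E_{μ_{K,j}}[d^K] ≤ εK, limsup_j E_{μ_{N,j}}[d^N] ≤ εN, and limsup_{j→∞} F_{p_j}(μ_{K,j}, μ_{N,j}) ≤ KL(μK* ‖ μN*). Then μ_{K,j} → μK* and μ_{N,j} → μN* in the weak-* topology (equivalently, in Wasserstein-1 distance on [0,1]). -/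

import Mathlib

/- STATEMENT 7: If (μK*, μN*) is the unique minimizer of KL over the feasible region,
   and (p_j, μ_{K,j}, μ_{N,j}) is an asymptotically feasible and asymptotically optimal
   sequence (p_j → 0, limsup F_{p_j} ≤ KL(μK* ‖ μN*)), then μ_{K,j} → μK* and
   μ_{N,j} → μN* in the weak-* topology on P([0,1]). -/

open MeasureTheory Filter Topology
open scoped ENNReal

abbrev I01 : Set ℝ := Set.Icc 0 1

open Classical in
/-- Kullback–Leibler divergence with logarithm base 2, valued in `EReal`. -/
noncomputable def klDiv2 {α : Type*} [MeasurableSpace α] (μ ν : Measure α) : EReal :=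
  if μ ≪ ν ∧ Integrable (fun x => Real.logb 2 ((μ.rnDeriv ν x).toReal)) μ
  then ((∫ x, Real.logb 2 ((μ.rnDeriv ν x).toReal) ∂μ : ℝ) : EReal)
  else ⊤

noncomputable def mix {α : Type*} [MeasurableSpace α] (p : ℝ) (μ ν : Measure α) : Measure α :=
  (ENNReal.ofReal p) • μ + (ENNReal.ofReal (1 - p)) • ν

/-- `F_p(μK, μN)`, with `F_0(μK, μN) = KL(μK ‖ μN)`. -/
noncomputable def Fp {α : Type*} [MeasurableSpace α] (p : ℝ) (μK μN : Measure α) : EReal :=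
  if p = 0 then klDiv2 μK μN
  else klDiv2 μK (mix p μK μN) + (((1 - p) / p : ℝ) : EReal) * klDiv2 μN (mix p μK μN)

/-- Feasibility of a pair of probability measures on `[0,1]` for the error constraints. -/
def FeasibleP (dK dN : I01 → ℝ≥0∞) (εK εN : ℝ) (μK μN : ProbabilityMeasure I01) : Prop :=
  (∫⁻ x, dK x ∂(μK : Measure I01)) ≤ ENNReal.ofReal εK ∧
    (∫⁻ x, dN x ∂(μN : Measure I01)) ≤ ENNReal.ofReal εN

/-! The Kullback–Leibler divergence is the supremum over bounded continuous `f` of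
`∫ f dμ - ∫ (e ^ f - 1) dν`, hence jointly lower semicontinuous for weak convergence. Since
`F_p(μK, μN) ≥ KL(μK ‖ μ_p)` and `μ_p` tends to the limit of `μN` as `p → 0`, every weak cluster
point of `(μ_{K,j}, μ_{N,j})` has divergence at most the minimum. It is also feasible, as
`μ ↦ ∫ d dμ` is lower semicontinuous for lower semicontinuous `d`, so it is the unique minimizer.
The space of probability measures is compact, and a net in a compact space with a single cluster
point converges to it. -/

open InformationTheory TopologicalSpace
open scoped BoundedContinuousFunction unitInterval

section Dual

variable {α : Type*} [MeasurableSpace α] {μ ν : Measure α} {g : α → ℝ} {M : ℝ}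

/-- The dual functional `∫ g dμ - ∫ (e ^ g - 1) dν` of the Kullback–Leibler divergence: its
supremum over bounded test functions `g` is `klDiv μ ν`, because `g ↦ e ^ g - 1` is the convex
conjugate of `klFun`. The `-1` makes this correct for finite measures of any mass. -/
noncomputable def klDual (μ ν : Measure α) (g : α → ℝ) : ℝ :=
  ∫ x, g x ∂μ - ∫ x, (Real.exp (g x) - 1) ∂ν

lemma mul_sub_exp_sub_one_le_klFun {r : ℝ} (hr : 0 ≤ r) (t : ℝ) :
    r * t - (Real.exp t - 1) ≤ klFun r := by
  rw [klFun_apply]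
  rcases hr.eq_or_lt with rfl | hr
  · simpa using (Real.exp_pos t).le
  · have h := Real.add_one_le_exp (t - Real.log r)
    rw [Real.exp_sub, Real.exp_log hr, le_div_iff₀ hr] at h
    linarith

lemma integrable_of_measurable_of_abs_le [IsFiniteMeasure μ] (hg : Measurable g)
    (hM : ∀ x, |g x| ≤ M) : Integrable g μ :=
  .of_bound hg.aestronglyMeasurable M (ae_of_all _ hM)

lemma abs_exp_sub_one_le {t : ℝ} (ht : |t| ≤ M) : |Real.exp t - 1| ≤ Real.exp M + 1 :=
  calc |Real.exp t - 1| ≤ |Real.exp t| + |1| := abs_sub _ _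
    _ ≤ Real.exp M + 1 := by
      rw [Real.abs_exp, abs_one]
      gcongr
      exact (le_abs_self t).trans ht

lemma integrable_exp_sub_one_of_abs_le [IsFiniteMeasure μ] (hg : Measurable g)
    (hM : ∀ x, |g x| ≤ M) : Integrable (fun x ↦ Real.exp (g x) - 1) μ :=
  integrable_of_measurable_of_abs_le (by fun_prop) fun x ↦ abs_exp_sub_one_le (hM x)

lemma integrable_rnDeriv_mul_sub_exp_sub_one [IsFiniteMeasure μ] [IsFiniteMeasure ν]
    (hμν : μ ≪ ν) (hg : Measurable g) (hM : ∀ x, |g x| ≤ M) :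
    Integrable (fun x ↦ (μ.rnDeriv ν x).toReal * g x - (Real.exp (g x) - 1)) ν :=
  ((integrable_rnDeriv_smul_iff hμν).2 (integrable_of_measurable_of_abs_le hg hM)).sub
    (integrable_exp_sub_one_of_abs_le hg hM)

lemma klDual_eq_integral_rnDeriv [IsFiniteMeasure μ] [IsFiniteMeasure ν]
    (hμν : μ ≪ ν) (hg : Measurable g) (hM : ∀ x, |g x| ≤ M) :
    klDual μ ν g = ∫ x, ((μ.rnDeriv ν x).toReal * g x - (Real.exp (g x) - 1)) ∂ν := by
  have hint := (integrable_rnDeriv_smul_iff hμν).2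
    (integrable_of_measurable_of_abs_le (μ := μ) hg hM)
  rw [klDual, ← integral_rnDeriv_smul hμν,
    ← integral_sub hint (integrable_exp_sub_one_of_abs_le hg hM)]
  rfl

lemma ofReal_klDual_le_klDiv [IsFiniteMeasure μ] [IsFiniteMeasure ν]
    (hg : Measurable g) (hM : ∀ x, |g x| ≤ M) :
    ENNReal.ofReal (klDual μ ν g) ≤ klDiv μ ν := by
  by_cases hfin : klDiv μ ν = ⊤
  · simp [hfin]
  obtain ⟨hμν, hllr⟩ := klDiv_ne_top_iff.1 hfin
  refine ENNReal.ofReal_le_of_le_toReal ?_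
  rw [klDual_eq_integral_rnDeriv hμν hg hM, toReal_klDiv_eq_integral_klFun hμν]
  exact integral_mono (integrable_rnDeriv_mul_sub_exp_sub_one hμν hg hM)
    ((integrable_klFun_rnDeriv_iff hμν).2 hllr)
    fun x ↦ mul_sub_exp_sub_one_le_klFun ENNReal.toReal_nonneg _

lemma tendsto_klDual [IsFiniteMeasure μ] [IsFiniteMeasure ν] {k : ℕ → α → ℝ}
    (hk : ∀ n, Measurable (k n)) (hM : ∀ n x, |k n x| ≤ M)
    (hμ : ∀ᵐ x ∂μ, Tendsto (k · x) atTop (𝓝 (g x)))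
    (hν : ∀ᵐ x ∂ν, Tendsto (k · x) atTop (𝓝 (g x))) :
    Tendsto (fun n ↦ klDual μ ν (k n)) atTop (𝓝 (klDual μ ν g)) := by
  refine .sub
    (tendsto_integral_of_dominated_convergence (fun _ ↦ M)
      (fun n ↦ (hk n).aestronglyMeasurable) (integrable_const M) (fun n ↦ ae_of_all _ (hM n)) hμ)
    (tendsto_integral_of_dominated_convergence (fun _ ↦ Real.exp M + 1)
      (fun n ↦ by fun_prop) (integrable_const _)
      (fun n ↦ ae_of_all _ fun x ↦ abs_exp_sub_one_le (hM n x)) ?_)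
  filter_upwards [hν] with x hx using ((Real.continuous_exp.tendsto _).comp hx).sub_const 1

end Dual

section TruncLog

/-- The logarithm truncated to `[-n, n]`. Truncating the argument rather than the value gives `-n`
at `r = 0`, where `Real.log` is `0`. -/
noncomputable def truncLog (n : ℕ) (r : ℝ) : ℝ :=
  Real.log (max (Real.exp (-n)) (min r (Real.exp n)))

lemma measurable_truncLog (n : ℕ) : Measurable (truncLog n) := by
  unfold truncLog
  fun_prop

lemma exp_truncLog (n : ℕ) (r : ℝ) :
    Real.exp (truncLog n r) = max (Real.exp (-n)) (min r (Real.exp n)) :=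
  Real.exp_log (lt_max_of_lt_left (Real.exp_pos _))

lemma abs_truncLog_le (n : ℕ) (r : ℝ) : |truncLog n r| ≤ n := by
  rw [abs_le, ← Real.exp_le_exp, ← Real.exp_le_exp (y := (n : ℝ)), exp_truncLog]
  refine ⟨le_max_left _ _, max_le ?_ (min_le_right _ _)⟩
  exact Real.exp_le_exp.2 (neg_le_self n.cast_nonneg)

lemma sub_mul_log_nonneg_of_mem_uIcc {r m : ℝ} (hm : 0 < m) (h : m ∈ Set.uIcc 1 r) :
    0 ≤ (r - m) * Real.log m := by
  rcases Set.mem_uIcc.1 h with ⟨h1, hr⟩ | ⟨hr, h1⟩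
  · exact mul_nonneg (sub_nonneg.2 hr) (Real.log_nonneg h1)
  · exact mul_nonneg_of_nonpos_of_nonpos (sub_nonpos.2 hr) (Real.log_nonpos hm.le h1)

lemma mul_truncLog_sub_exp_sub_one_nonneg (r : ℝ) (n : ℕ) :
    0 ≤ r * truncLog n r - (Real.exp (truncLog n r) - 1) := by
  rw [exp_truncLog, truncLog]
  set m := max (Real.exp (-n)) (min r (Real.exp n))
  have hm0 : 0 < m := lt_max_of_lt_left (Real.exp_pos _)
  have hlow : Real.exp (-n) ≤ 1 := Real.exp_le_one_iff.2 (neg_nonpos.2 n.cast_nonneg)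
  have hhigh : 1 ≤ Real.exp n := Real.one_le_exp n.cast_nonneg
  have hmem : m ∈ Set.uIcc 1 r := by grind [Set.mem_uIcc]
  calc 0 ≤ (r - m) * Real.log m + klFun m :=
        add_nonneg (sub_mul_log_nonneg_of_mem_uIcc hm0 hmem) (klFun_nonneg hm0.le)
    _ = r * Real.log m - (m - 1) := by rw [klFun_apply]; ring

lemma tendsto_exp_truncLog {r : ℝ} (hr : 0 ≤ r) :
    Tendsto (fun n ↦ Real.exp (truncLog n r)) atTop (𝓝 r) := by
  have hlow : Tendsto (fun n : ℕ ↦ max (Real.exp (-n)) r) atTop (𝓝 (max 0 r)) :=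
    (Real.tendsto_exp_neg_atTop_nhds_zero.comp tendsto_natCast_atTop_atTop).max tendsto_const_nhds
  have hhigh : ∀ᶠ n : ℕ in atTop, r ≤ Real.exp n :=
    (Real.tendsto_exp_atTop.comp tendsto_natCast_atTop_atTop).eventually_ge_atTop r
  rw [max_eq_right hr] at hlow
  refine hlow.congr' ?_
  filter_upwards [hhigh] with n hn
  rw [exp_truncLog, min_eq_left hn]

lemma tendsto_mul_truncLog_sub_exp_sub_one {r : ℝ} (hr : 0 ≤ r) :
    Tendsto (fun n ↦ r * truncLog n r - (Real.exp (truncLog n r) - 1)) atTop (𝓝 (klFun r)) := by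
  have hexp := tendsto_exp_truncLog hr
  have hmul : Tendsto (fun n ↦ r * truncLog n r) atTop (𝓝 (r * Real.log r)) := by
    rcases hr.eq_or_lt with rfl | hr
    · simp
    · simpa only [Real.log_exp] using (hexp.log hr.ne').const_mul r
  rw [klFun_apply, add_sub_assoc, ← neg_sub r 1, ← sub_eq_add_neg]
  exact hmul.sub (hexp.sub_const 1)

end TruncLog

section Variational

variable {X : Type*} [TopologicalSpace X] [MeasurableSpace X] [BorelSpace X]

lemma exists_seq_boundedContinuous_tendsto_ae [NormalSpace X] {μ : Measure X} [IsFiniteMeasure μ]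
    [μ.WeaklyRegular] {g : X → ℝ} {M : ℝ} (hg : Measurable g) (hM : ∀ x, |g x| ≤ M) :
    ∃ k : ℕ → X →ᵇ ℝ, (∀ n x, |k n x| ≤ M) ∧ ∀ᵐ x ∂μ, Tendsto (k · x) atTop (𝓝 (g x)) := by
  have hg1 : MemLp g 1 μ := memLp_one_iff_integrable.2 (integrable_of_measurable_of_abs_le hg hM)
  choose f hf hf1 using fun n : ℕ ↦
    hg1.exists_boundedContinuous_eLpNorm_sub_le ENNReal.one_ne_top
      (ENNReal.inv_ne_zero.2 (ENNReal.natCast_ne_top n))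
  have hL1 : Tendsto (fun n ↦ eLpNorm (⇑(f n) - g) 1 μ) atTop (𝓝 0) :=
    tendsto_of_tendsto_of_tendsto_of_le_of_le tendsto_const_nhds
      ENNReal.tendsto_inv_nat_nhds_zero (fun _ ↦ zero_le)
      fun n ↦ (eLpNorm_sub_comm _ _ _ _).trans_le (hf n)
  obtain ⟨ns, -, hae⟩ := (tendstoInMeasure_of_tendsto_eLpNorm one_ne_zero
    (fun n ↦ (hf1 n).1) hg1.1 hL1).exists_seq_tendsto_ae
  have hclip : ∀ n x, |max (-M) (min M (f (ns n) x))| ≤ M := fun n x ↦ by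
    have hM0 : 0 ≤ M := (abs_nonneg _).trans (hM x)
    exact abs_le.2 ⟨le_max_left _ _, max_le (neg_le_self hM0) (min_le_left _ _)⟩
  refine ⟨fun n ↦ .ofNormedAddCommGroup (fun x ↦ max (-M) (min M (f (ns n) x)))
    (by fun_prop) M (hclip n), hclip, ?_⟩
  filter_upwards [hae] with x hx
  have hgx : max (-M) (min M (g x)) = g x := by
    rw [min_eq_right (abs_le.1 (hM x)).2, max_eq_right (abs_le.1 (hM x)).1]
  have := (tendsto_const_nhds (x := -M)).max ((tendsto_const_nhds (x := M)).min hx)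
  rwa [hgx] at this

variable [PseudoMetrizableSpace X] {μ ν : Measure X} [IsFiniteMeasure μ] [IsFiniteMeasure ν]

lemma ofReal_klDual_le_iSup_boundedContinuous {g : X → ℝ} {M : ℝ} (hg : Measurable g)
    (hM : ∀ x, |g x| ≤ M) :
    ENNReal.ofReal (klDual μ ν g) ≤ ⨆ f : X →ᵇ ℝ, ENNReal.ofReal (klDual μ ν f) := by
  obtain ⟨k, hk, hae⟩ := exists_seq_boundedContinuous_tendsto_ae (μ := μ + ν) hg hM
  obtain ⟨hμ, hν⟩ := ae_add_measure_iff.1 hae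
  have hlim := tendsto_klDual (fun n ↦ (k n).continuous.measurable) hk hμ hν
  exact le_of_tendsto' (ENNReal.tendsto_ofReal hlim) fun n ↦
    le_iSup (fun f : X →ᵇ ℝ ↦ ENNReal.ofReal (klDual μ ν f)) (k n)

lemma iSup_klDual_eq_top_of_not_ac (h : ¬ μ ≪ ν) :
    ⨆ f : X →ᵇ ℝ, ENNReal.ofReal (klDual μ ν f) = ⊤ := by
  obtain ⟨s, hs, hνs, hμs⟩ : ∃ s, MeasurableSet s ∧ ν s = 0 ∧ μ s ≠ 0 := by
    contrapose! h
    exact .mk h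
  have hdual (n : ℕ) : ENNReal.ofReal (klDual μ ν (s.indicator fun _ ↦ (n : ℝ))) = n * μ s := by
    have hν : ∫ x, (Real.exp (s.indicator (fun _ ↦ (n : ℝ)) x) - 1) ∂ν = 0 := by
      refine integral_eq_zero_of_ae ?_
      filter_upwards [measure_eq_zero_iff_ae_notMem.1 hνs] with x hx
      simp [hx]
    rw [klDual, hν, sub_zero, integral_indicator_const _ hs, smul_eq_mul, mul_comm,
      ENNReal.ofReal_mul n.cast_nonneg, ENNReal.ofReal_natCast, ofReal_measureReal]
  rw [← top_le_iff]
  calc ⊤ = ⨆ n : ℕ, n * μ s := by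
        rw [← ENNReal.iSup_mul, ENNReal.iSup_natCast, ENNReal.top_mul hμs]
    _ ≤ ⨆ f : X →ᵇ ℝ, ENNReal.ofReal (klDual μ ν f) := iSup_le fun n ↦ by
        rw [← hdual]
        refine ofReal_klDual_le_iSup_boundedContinuous (measurable_const.indicator hs) (M := n)
          fun x ↦ ?_
        by_cases hx : x ∈ s <;> simp [hx]

lemma klDiv_le_iSup_klDual_of_ac (h : μ ≪ ν) :
    klDiv μ ν ≤ ⨆ f : X →ᵇ ℝ, ENNReal.ofReal (klDual μ ν f) := by
  let r : X → ℝ := fun x ↦ (μ.rnDeriv ν x).toReal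
  have hr : Measurable r := (Measure.measurable_rnDeriv μ ν).ennreal_toReal
  let g (n : ℕ) (x : X) : ℝ := truncLog n (r x)
  have hg n : Measurable (g n) := (measurable_truncLog n).comp hr
  have hbound n x : |g n x| ≤ n := abs_truncLog_le n (r x)
  let ψ (n : ℕ) (x : X) : ℝ := r x * g n x - (Real.exp (g n x) - 1)
  calc klDiv μ ν = ∫⁻ x, liminf (fun n ↦ ENNReal.ofReal (ψ n x)) atTop ∂ν := by
        rw [klDiv_eq_lintegral_klFun_of_ac h]
        exact lintegral_congr fun x ↦ (ENNReal.tendsto_ofReal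
          (tendsto_mul_truncLog_sub_exp_sub_one ENNReal.toReal_nonneg)).liminf_eq.symm
    _ ≤ liminf (fun n ↦ ∫⁻ x, ENNReal.ofReal (ψ n x) ∂ν) atTop :=
        lintegral_liminf_le fun n ↦ by fun_prop
    _ = liminf (fun n ↦ ENNReal.ofReal (klDual μ ν (g n))) atTop := by
        congr! with n
        rw [klDual_eq_integral_rnDeriv h (hg n) (hbound n)]
        exact (ofReal_integral_eq_lintegral_ofReal
          (integrable_rnDeriv_mul_sub_exp_sub_one h (hg n) (hbound n))
          (ae_of_all _ fun x ↦ mul_truncLog_sub_exp_sub_one_nonneg _ n)).symm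
    _ ≤ ⨆ f : X →ᵇ ℝ, ENNReal.ofReal (klDual μ ν f) :=
        liminf_le_of_le (by isBoundedDefault) fun b hb ↦
          let ⟨n, hn⟩ := hb.exists
          hn.trans (ofReal_klDual_le_iSup_boundedContinuous (hg n) (hbound n))

theorem klDiv_eq_iSup_klDual :
    klDiv μ ν = ⨆ f : X →ᵇ ℝ, ENNReal.ofReal (klDual μ ν f) := by
  refine le_antisymm ?_ (iSup_le fun f ↦
    ofReal_klDual_le_klDiv f.continuous.measurable f.norm_coe_le_norm)
  by_cases h : μ ≪ ν
  · exact klDiv_le_iSup_klDual_of_ac h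
  · exact le_top.trans_eq (iSup_klDual_eq_top_of_not_ac h).symm

end Variational

section Semicontinuity

variable {X : Type*} [TopologicalSpace X]

lemma continuous_klDual [MeasurableSpace X] [OpensMeasurableSpace X] (f : X →ᵇ ℝ) :
    Continuous fun μν : FiniteMeasure X × FiniteMeasure X ↦ klDual μν.1 μν.2 f := by
  let e : X →ᵇ ℝ := .ofNormedAddCommGroup (fun x ↦ Real.exp (f x) - 1) (by fun_prop) _
    fun x ↦ abs_exp_sub_one_le (f.norm_coe_le_norm x)
  exact .sub
    ((FiniteMeasure.continuous_integral_boundedContinuousFunction f).comp continuous_fst)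
    ((FiniteMeasure.continuous_integral_boundedContinuousFunction e).comp continuous_snd)

theorem lowerSemicontinuous_klDiv [PseudoMetrizableSpace X] [MeasurableSpace X] [BorelSpace X] :
    LowerSemicontinuous fun μν : FiniteMeasure X × FiniteMeasure X ↦
      klDiv (μν.1 : Measure X) μν.2 := by
  simp_rw [klDiv_eq_iSup_klDual]
  exact lowerSemicontinuous_iSup fun f ↦
    (ENNReal.continuous_ofReal.comp (continuous_klDual f)).lowerSemicontinuous

lemma lowerSemicontinuous_lintegral_ofReal [PseudoMetrizableSpace X] [SeparableSpace X]
    [MeasurableSpace X] [OpensMeasurableSpace X] {h : X → ℝ} (hh : LowerSemicontinuous h)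
    (h0 : ∀ x, 0 ≤ h x) :
    LowerSemicontinuous fun μ : ProbabilityMeasure X ↦
      ∫⁻ x, ENNReal.ofReal (h x) ∂(μ : Measure X) := by
  have layer_cake (μ : Measure X) :
      ∫⁻ x, ENNReal.ofReal (h x) ∂μ = ∫⁻ t in Set.Ioi (0 : ℝ), μ {x | t < h x} :=
    lintegral_eq_lintegral_meas_lt μ (ae_of_all _ h0) hh.measurable.aemeasurable
  simp_rw [layer_cake, lowerSemicontinuous_iff_le_liminf]
  intro μ
  calc ∫⁻ t in Set.Ioi (0 : ℝ), (μ : Measure X) {x | t < h x}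
      ≤ ∫⁻ t in Set.Ioi (0 : ℝ),
          liminf (fun ν : ProbabilityMeasure X ↦ (ν : Measure X) {x | t < h x}) (𝓝 μ) :=
        lintegral_mono fun t ↦
          ProbabilityMeasure.le_liminf_measure_open_of_tendsto tendsto_id (hh.isOpen_preimage t)
    _ ≤ liminf (fun ν : ProbabilityMeasure X ↦
          ∫⁻ t in Set.Ioi (0 : ℝ), (ν : Measure X) {x | t < h x}) (𝓝 μ) :=
        lintegral_liminf_le fun ν ↦ Antitone.measurable fun s t hst ↦
          measure_mono fun x hx ↦ hst.trans_lt hx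

theorem lowerSemicontinuous_lintegral [PseudoMetrizableSpace X] [SeparableSpace X]
    [MeasurableSpace X] [OpensMeasurableSpace X] {f : X → ℝ≥0∞} (hf : LowerSemicontinuous f) :
    LowerSemicontinuous fun μ : ProbabilityMeasure X ↦ ∫⁻ x, f x ∂(μ : Measure X) := by
  have hsup (μ : ProbabilityMeasure X) : ∫⁻ x, f x ∂(μ : Measure X) =
      ⨆ n : ℕ, ∫⁻ x, ENNReal.ofReal (ENNReal.truncateToReal n (f x)) ∂(μ : Measure X) := by
    have htrunc (n : ℕ) (x : X) :
        ENNReal.ofReal (ENNReal.truncateToReal n (f x)) = min (n : ℝ≥0∞) (f x) :=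
      ENNReal.ofReal_toReal (ne_top_of_le_ne_top (ENNReal.natCast_ne_top n) (min_le_left _ _))
    simp_rw [htrunc]
    rw [← lintegral_iSup (fun n ↦ measurable_const.min hf.measurable)
      fun m n hmn x ↦ min_le_min_right _ (Nat.cast_le.2 hmn)]
    refine lintegral_congr fun x ↦ ?_
    rw [← iSup_inf_eq, ENNReal.iSup_natCast, top_inf_eq]
  simp_rw [hsup]
  exact lowerSemicontinuous_iSup fun n ↦ lowerSemicontinuous_lintegral_ofReal
    ((ENNReal.continuous_truncateToReal (ENNReal.natCast_ne_top n)).comp_lowerSemicontinuous hf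
      (ENNReal.monotone_truncateToReal (ENNReal.natCast_ne_top n)))
    fun _ ↦ ENNReal.truncateToReal_nonneg

lemma le_limsup_comp_of_mapClusterPt {ι γ : Type*} [CompleteLinearOrder γ]
    {f : X → γ} {x : X} (hf : LowerSemicontinuousAt f x) {l : Filter ι} {u : ι → X}
    (hx : MapClusterPt x l u) : f x ≤ limsup (f ∘ u) l :=
  have : (𝓝 x ⊓ map u l).NeBot := hx
  calc f x ≤ liminf f (𝓝 x) := hf.le_liminf
    _ ≤ liminf f (𝓝 x ⊓ map u l) := liminf_le_liminf_of_le inf_le_left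
    _ ≤ limsup f (𝓝 x ⊓ map u l) := liminf_le_limsup
    _ ≤ limsup f (map u l) := limsup_le_limsup_of_le inf_le_right

end Semicontinuity

section Base2

variable {α : Type*} [MeasurableSpace α]

lemma klDiv2_eq_klDiv_div_log (μ ν : Measure α) [IsProbabilityMeasure μ] [IsProbabilityMeasure ν] :
    klDiv2 μ ν = (klDiv μ ν / ENNReal.ofReal (Real.log 2) : ℝ≥0∞) := by
  have hlog : 0 < Real.log 2 := Real.log_pos one_lt_two
  have hlogb : (fun x ↦ Real.logb 2 ((μ.rnDeriv ν x).toReal)) =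
      fun x ↦ llr μ ν x * (Real.log 2)⁻¹ := by
    ext x
    rw [llr, Real.logb, div_eq_mul_inv]
  have hint : Integrable (fun x ↦ llr μ ν x * (Real.log 2)⁻¹) μ ↔ Integrable (llr μ ν) μ :=
    integrable_mul_const_iff (inv_ne_zero hlog.ne').isUnit _
  rw [klDiv2, hlogb, hint]
  split_ifs with h
  · have hnonneg : 0 ≤ ∫ x, llr μ ν x ∂μ := by
      simpa using integral_llr_add_sub_measure_univ_nonneg h.1 h.2
    rw [integral_mul_const, ← div_eq_mul_inv, klDiv_of_ac_of_integrable h.1 h.2, probReal_univ,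
      probReal_univ, add_sub_cancel_right, ← ENNReal.ofReal_div_of_pos hlog,
      EReal.coe_ennreal_ofReal, max_eq_left (div_nonneg hnonneg hlog.le)]
  · rw [klDiv_eq_top_iff.2 fun hac hi ↦ h ⟨hac, hi⟩,
      ENNReal.top_div_of_ne_top ENNReal.ofReal_ne_top, EReal.coe_ennreal_top]

lemma klDiv2_nonneg (μ ν : Measure α) [IsProbabilityMeasure μ] [IsProbabilityMeasure ν] :
    0 ≤ klDiv2 μ ν := by
  rw [klDiv2_eq_klDiv_div_log]
  exact EReal.coe_ennreal_nonneg _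

theorem lowerSemicontinuous_klDiv2 {X : Type*} [TopologicalSpace X] [PseudoMetrizableSpace X]
    [MeasurableSpace X] [BorelSpace X] :
    LowerSemicontinuous fun μν : ProbabilityMeasure X × ProbabilityMeasure X ↦
      klDiv2 (μν.1 : Measure X) μν.2 := by
  have hkl : LowerSemicontinuous fun μν : ProbabilityMeasure X × ProbabilityMeasure X ↦
      klDiv (μν.1 : Measure X) μν.2 :=
    lowerSemicontinuous_klDiv.comp (ProbabilityMeasure.toFiniteMeasure_continuous.prodMap
      ProbabilityMeasure.toFiniteMeasure_continuous)
  have hlog : ENNReal.ofReal (Real.log 2) ≠ 0 :=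
    (ENNReal.ofReal_pos.2 (Real.log_pos one_lt_two)).ne'
  simp_rw [klDiv2_eq_klDiv_div_log]
  exact (continuous_coe_ennreal_ereal.comp (ENNReal.continuous_div_const _ hlog))
    |>.comp_lowerSemicontinuous hkl
    fun a b hab ↦ EReal.coe_ennreal_le_coe_ennreal_iff.2 (ENNReal.div_le_div_right hab _)

end Base2

section Mixture

lemma mix_zero {α : Type*} [MeasurableSpace α] (μ ν : Measure α) : mix 0 μ ν = ν := by
  simp [mix]

lemma isProbabilityMeasure_mix {α : Type*} [MeasurableSpace α] {p : ℝ} (hp : p ∈ I)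
    (μ ν : Measure α) [IsProbabilityMeasure μ] [IsProbabilityMeasure ν] :
    IsProbabilityMeasure (mix p μ ν) := by
  constructor
  simp [mix, ← ENNReal.ofReal_add hp.1 (sub_nonneg.2 hp.2)]

lemma integral_mix {α : Type*} [MeasurableSpace α] {p : ℝ} (hp : p ∈ I) {μ ν : Measure α}
    {f : α → ℝ} (hμ : Integrable f μ) (hν : Integrable f ν) :
    ∫ x, f x ∂mix p μ ν = p * ∫ x, f x ∂μ + (1 - p) * ∫ x, f x ∂ν := by
  rw [mix, integral_add_measure (hμ.smul_measure ENNReal.ofReal_ne_top)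
    (hν.smul_measure ENNReal.ofReal_ne_top), integral_smul_measure, integral_smul_measure,
    ENNReal.toReal_ofReal hp.1, ENNReal.toReal_ofReal (sub_nonneg.2 hp.2), smul_eq_mul, smul_eq_mul]

lemma klDiv2_mix_le_Fp {α : Type*} [MeasurableSpace α] {p : ℝ} (hp : p ∈ I) (μ ν : Measure α)
    [IsProbabilityMeasure μ] [IsProbabilityMeasure ν] : klDiv2 μ (mix p μ ν) ≤ Fp p μ ν := by
  rw [Fp]
  split_ifs with h
  · rw [h, mix_zero]
  · have := isProbabilityMeasure_mix hp μ ν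
    have hcoeff : (0 : EReal) ≤ ((1 - p) / p : ℝ) :=
      EReal.coe_nonneg.2 (div_nonneg (sub_nonneg.2 hp.2) hp.1)
    exact le_add_of_nonneg_right (mul_nonneg hcoeff (klDiv2_nonneg _ _))

variable {X : Type*} [MeasurableSpace X]

/-- The mixture `p • μ + (1 - p) • ν` as a probability measure. The weight lives in the unit
interval, so that the mixture is a map between compact spaces when `X` is compact. -/
noncomputable def probMix (p : I) (μ ν : ProbabilityMeasure X) : ProbabilityMeasure X :=
  ⟨mix p (μ : Measure X) ν, isProbabilityMeasure_mix p.2 _ _⟩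

lemma probMix_zero (μ ν : ProbabilityMeasure X) : probMix 0 μ ν = ν :=
  Subtype.ext (mix_zero (μ : Measure X) ν)

lemma continuous_probMix [TopologicalSpace X] [OpensMeasurableSpace X] :
    Continuous fun z : I × ProbabilityMeasure X × ProbabilityMeasure X ↦
      probMix z.1 z.2.1 z.2.2 := by
  refine ProbabilityMeasure.continuous_iff_forall_continuous_integral.2 fun f ↦ ?_
  have hmix (z : I × ProbabilityMeasure X × ProbabilityMeasure X) :
      ∫ x, f x ∂(probMix z.1 z.2.1 z.2.2 : Measure X) =
        z.1 * ∫ x, f x ∂(z.2.1 : Measure X) + (1 - z.1) * ∫ x, f x ∂(z.2.2 : Measure X) :=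
    integral_mix z.1.2 (f.integrable (z.2.1 : Measure X)) (f.integrable (z.2.2 : Measure X))
  have hf : Continuous fun μ : ProbabilityMeasure X ↦ ∫ x, f x ∂(μ : Measure X) :=
    ProbabilityMeasure.continuous_integral_boundedContinuousFunction f
  have hp : Continuous fun z : I × ProbabilityMeasure X × ProbabilityMeasure X ↦ (z.1 : ℝ) := by
    fun_prop
  simp_rw [hmix]
  exact (hp.mul (hf.comp continuous_snd.fst)).add
    ((continuous_const.sub hp).mul (hf.comp continuous_snd.snd))

theorem klDiv2_le_limsup_Fp_of_mapClusterPt [TopologicalSpace X] [PseudoMetrizableSpace X]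
    [BorelSpace X] {ι : Type*} {l : Filter ι} {p : ι → I} {μ ν : ι → ProbabilityMeasure X}
    {μ' ν' : ProbabilityMeasure X} (h : MapClusterPt (0, μ', ν') l fun i ↦ (p i, μ i, ν i)) :
    klDiv2 (μ' : Measure X) ν' ≤ limsup (fun i ↦ Fp (p i) (μ i : Measure X) (ν i)) l :=
  calc klDiv2 (μ' : Measure X) ν' = klDiv2 (μ' : Measure X) (probMix 0 μ' ν') := by
        rw [probMix_zero]
    _ ≤ limsup (fun i ↦ klDiv2 (μ i : Measure X) (probMix (p i) (μ i) (ν i))) l :=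
        le_limsup_comp_of_mapClusterPt (lowerSemicontinuous_klDiv2 _) <|
          h.continuousAt_comp (continuous_snd.fst.prodMk continuous_probMix).continuousAt
    _ ≤ limsup (fun i ↦ Fp (p i) (μ i : Measure X) (ν i)) l :=
        limsup_le_limsup (.of_forall fun i ↦ klDiv2_mix_le_Fp (p i).2 (μ i : Measure X) (ν i))

end Mixture

theorem stmt_7_general {X : Type*} [TopologicalSpace X] [CompactSpace X] [MetrizableSpace X]
    [MeasurableSpace X] [BorelSpace X] {dK dN : X → ℝ≥0∞} (hdK : LowerSemicontinuous dK)
    (hdN : LowerSemicontinuous dN) {εK εN : ℝ≥0∞} {μs νs : ProbabilityMeasure X}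
    (huniq : ∀ μ ν : ProbabilityMeasure X, ∫⁻ x, dK x ∂(μ : Measure X) ≤ εK →
      ∫⁻ x, dN x ∂(ν : Measure X) ≤ εN →
      klDiv2 (μ : Measure X) (ν : Measure X) ≤ klDiv2 (μs : Measure X) (νs : Measure X) →
      μ = μs ∧ ν = νs)
    {ι : Type*} {l : Filter ι} {p : ι → ℝ} (hp : ∀ i, p i ∈ I) (hp0 : Tendsto p l (𝓝 0))
    {μ ν : ι → ProbabilityMeasure X}
    (hμ : limsup (fun i ↦ ∫⁻ x, dK x ∂(μ i : Measure X)) l ≤ εK)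
    (hν : limsup (fun i ↦ ∫⁻ x, dN x ∂(ν i : Measure X)) l ≤ εN)
    (hopt : limsup (fun i ↦ Fp (p i) (μ i : Measure X) (ν i : Measure X)) l ≤
      klDiv2 (μs : Measure X) (νs : Measure X)) :
    Tendsto μ l (𝓝 μs) ∧ Tendsto ν l (𝓝 νs) := by
  let q (i : ι) : I := ⟨p i, hp i⟩
  have hq : Tendsto q l (𝓝 0) := tendsto_subtype_rng.2 hp0
  suffices Tendsto (fun i ↦ (q i, μ i, ν i)) l (𝓝 (0, μs, νs)) from
    ⟨this.snd_nhds.fst_nhds, this.snd_nhds.snd_nhds⟩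
  refine tendsto_nhds_of_unique_mapClusterPt fun ⟨r, μ', ν'⟩ h ↦ ?_
  obtain rfl : r = 0 :=
    eq_of_nhds_neBot (ClusterPt.mono (h.continuousAt_comp continuous_fst.continuousAt) hq)
  have hμ' := le_limsup_comp_of_mapClusterPt (lowerSemicontinuous_lintegral hdK μ')
    (h.continuousAt_comp continuous_snd.fst.continuousAt)
  have hν' := le_limsup_comp_of_mapClusterPt (lowerSemicontinuous_lintegral hdN ν')
    (h.continuousAt_comp continuous_snd.snd.continuousAt)
  obtain ⟨rfl, rfl⟩ := huniq μ' ν' (hμ'.trans hμ) (hν'.trans hν)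
    ((klDiv2_le_limsup_Fp_of_mapClusterPt h).trans hopt)
  rfl

theorem stmt_7
    (dK dN : I01 → ℝ≥0∞)
    (hdK_lsc : LowerSemicontinuous dK) (hdN_lsc : LowerSemicontinuous dN)
    (hdK1 : dK ⟨1, Set.right_mem_Icc.mpr zero_le_one⟩ = 0)
    (hdN0 : dN ⟨0, Set.left_mem_Icc.mpr zero_le_one⟩ = 0)
    (hc : ∃ c : I01, dK c ≠ ⊤ ∧ dN c ≠ ⊤)
    (εK εN : ℝ) (hεK : 0 ≤ εK) (hεN : 0 ≤ εN)
    -- (μK*, μN*) is the UNIQUE minimizer of KL over the feasible region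
    (μKs μNs : ProbabilityMeasure I01)
    (hfeas : FeasibleP dK dN εK εN μKs μNs)
    (hmin : ∀ μK μN : ProbabilityMeasure I01, FeasibleP dK dN εK εN μK μN →
      klDiv2 (μKs : Measure I01) (μNs : Measure I01) ≤ klDiv2 (μK : Measure I01) (μN : Measure I01))
    (huniq : ∀ μK μN : ProbabilityMeasure I01, FeasibleP dK dN εK εN μK μN →
      klDiv2 (μK : Measure I01) (μN : Measure I01)
          = klDiv2 (μKs : Measure I01) (μNs : Measure I01) →
      μK = μKs ∧ μN = μNs)
    -- the sequence: p_j → 0, asymptotically feasible, asymptotically optimal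
    (pj : ℕ → ℝ) (hpj : ∀ j, pj j ∈ Set.Ioo (0 : ℝ) 1) (hpj0 : Tendsto pj atTop (nhds 0))
    (μKj μNj : ℕ → ProbabilityMeasure I01)
    (hEK : Filter.limsup (fun j => ∫⁻ x, dK x ∂((μKj j) : Measure I01)) atTop
      ≤ ENNReal.ofReal εK)
    (hEN : Filter.limsup (fun j => ∫⁻ x, dN x ∂((μNj j) : Measure I01)) atTop
      ≤ ENNReal.ofReal εN)
    (hopt : Filter.limsup
        (fun j => Fp (pj j) ((μKj j) : Measure I01) ((μNj j) : Measure I01)) atTop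
      ≤ klDiv2 (μKs : Measure I01) (μNs : Measure I01)) :
    Tendsto μKj atTop (nhds μKs) ∧ Tendsto μNj atTop (nhds μNs) := by
  exact stmt_7_general hdK_lsc hdN_lsc
    (fun μK μN hK hN hle ↦ huniq μK μN ⟨hK, hN⟩ (hle.antisymm (hmin μK μN ⟨hK, hN⟩)))
    (fun j ↦ Set.Ioo_subset_Icc_self (hpj j)) hpj0 hEK hEN hopt
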